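/- For h with Re h > 0: ( e^{-2πh} ; e^{-2πh} )_∞ = h^{-1/2} exp( (π/12)(h − 1/h) ) · ( e^{-2π/h} ; e^{-2π/h} )_∞, where the branch of the square root is principal. -/

import Mathlib

open Real

lemma csqrt_exp_aux {z : ℂ} (hz : z ≠ 0) : Complex.sqrt z = Complex.exp (Complex.log z / 2) := by
  rw [Complex.sqrt, Complex.cpow_def_of_ne_zero hz]
  congr 1

lemma eta_I_mul_aux (w : ℂ) : ModularForm.eta (Complex.I * w) =
    Complex.exp (-(Real.pi / 12 * w)) *
      ∏' j : ℕ, (1 - Complex.exp (-2 * Real.pi * w) ^ (j + 1)) := by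
  unfold ModularForm.eta
  congr 1
  · unfold Function.Periodic.qParam
    congr 1
    push_cast
    linear_combination (Real.pi * w / 12 : ℂ) * Complex.I_mul_I
  · refine tprod_congr fun j => ?_
    rw [ModularForm.eta_q_eq_pow]
    congr 3
    linear_combination (2 * Real.pi * w : ℂ) * Complex.I_mul_I

/-- Modular transformation: for `Re h > 0`,
`(e^{-2πh}; e^{-2πh})_∞ = h^{-1/2} exp((π/12)(h − 1/h)) (e^{-2π/h}; e^{-2π/h})_∞`
with the principal branch of the square root. -/
theorem stmt18 (h : ℂ) (hh : 0 < h.re) :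
    (∏' j : ℕ, (1 - Complex.exp (-2 * Real.pi * h) ^ (j + 1)))
      = h ^ (-(1 / 2) : ℂ) * Complex.exp ((Real.pi / 12) * (h - 1 / h))
        * ∏' j : ℕ, (1 - Complex.exp (-2 * Real.pi / h) ^ (j + 1)) := by
  have h0 : h ≠ 0 := by rintro rfl; simp at hh
  have hz : Complex.I * h ∈ UpperHalfPlane.upperHalfPlaneSet := by
    simpa [UpperHalfPlane.upperHalfPlaneSet] using hh
  have key := ModularForm.eta_comp_eq_csqrt_I_inv hz
  have e1 : -1 / (Complex.I * h) = Complex.I * (1 / h) := by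
    field_simp
    simp
  have hlog : Complex.log (Complex.I * h) = Complex.log Complex.I + Complex.log h := by
    apply Complex.log_mul Complex.I_ne_zero h0
    have := Complex.abs_arg_lt_pi_div_two_iff.mpr (Or.inl hh)
    rw [abs_lt] at this
    rw [Complex.arg_I]
    constructor <;> linarith [Real.pi_pos]
  have hs : Complex.sqrt (Complex.I * h) = Complex.sqrt Complex.I * Complex.exp (Complex.log h / 2) := by
    rw [csqrt_exp_aux (mul_ne_zero Complex.I_ne_zero h0),
      csqrt_exp_aux Complex.I_ne_zero, hlog, ← Complex.exp_add]
    congr 1; ring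
  have hsI : Complex.sqrt Complex.I ≠ 0 := by
    rw [csqrt_exp_aux Complex.I_ne_zero]; exact Complex.exp_ne_zero _
  simp only [Function.comp_apply, Pi.smul_apply, Pi.mul_apply, smul_eq_mul, e1, hs,
    eta_I_mul_aux] at key
  rw [← mul_assoc, ← mul_assoc, ← mul_assoc, inv_mul_cancel₀ hsI, one_mul] at key
  rw [Complex.cpow_def_of_ne_zero h0]
  have e2 : Complex.exp (Complex.log h * -(1 / 2)) * Complex.exp ((Real.pi / 12) * (h - 1 / h))
      = Complex.exp (-(Complex.log h / 2)) * Complex.exp (Real.pi / 12 * h) *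
        Complex.exp (-(Real.pi / 12 * (1 / h))) := by
    simp only [← Complex.exp_add]; congr 1; ring
  rw [e2, mul_one_div, mul_assoc (_ * _) (Complex.exp (-(Real.pi / 12 / h)))]
  simp only [mul_one_div] at key
  rw [key]
  have e3 : Complex.exp (-(Complex.log h / 2)) * Complex.exp (Real.pi / 12 * h) *
      (Complex.exp (Complex.log h / 2) * Complex.exp (-(Real.pi / 12 * h))) = 1 := by
    simp only [← Complex.exp_add]
    rw [← Complex.exp_zero]; congr 1; ring
  rw [← mul_assoc (_ * _) (_ * _), e3, one_mul]
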